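/- Ellipsoid approximation: for every measurable function r: ℝ^n × F^d → [0,∞) such that r(x,·) is a norm on F^d for each x, there exists a measurable matrix function W: ℝ^n → S_d (Hermitian positive definite) satisfying r(x,u) ≤ |W(x)u| ≤ √d · r(x,u) for all u ∈ F^d and a.e. x. -/

import Mathlib

open MeasureTheory ENNReal

noncomputable section

abbrev Euc (n : ℕ) := EuclideanSpace ℝ (Fin n)

open scoped ComplexOrder

/-- The Euclidean norm of a vector in `ℂ^d`. -/
def evNorm {d : ℕ} (u : Fin d → ℂ) : ℝ := ‖(WithLp.equiv 2 (Fin d → ℂ)).symm u‖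

/-- The operator norm of a `d × d` complex matrix, induced by the Euclidean norm. -/
def opNorm {d : ℕ} (V : Matrix (Fin d) (Fin d) ℂ) : ℝ :=
  ⨆ u : {u : Fin d → ℂ // evNorm u = 1}, evNorm (V.mulVec u)

namespace Ellip

open Matrix

lemma argmax_measurable {X E : Type*} [MeasurableSpace X] [TopologicalSpace E]
    [MeasurableSpace E] [BorelSpace E] (K : ℕ → Set E) (hKc : ∀ N, IsCompact (K N))
    {ι : Type*} [Countable ι] (ρ : X → ι → ℝ) (hρ : Measurable ρ) (G : ι → E → ℝ)
    (hG : ∀ i, Continuous (G i)) (D : E → ℝ) (hD : Continuous D) (S : Set E) (hS : IsClosed S)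
    (A : X → E) (hAS : ∀ x, A x ∈ S) (hAG : ∀ x i, G i (A x) ≤ ρ x i)
    (hK : ∀ x, ∃ N, ∀ B ∈ S, (∀ i, G i B ≤ ρ x i) → B ∈ K N)
    (huniq : ∀ x, ∀ B ∈ S, (∀ i, G i B ≤ ρ x i) → D (A x) ≤ D B → B = A x) :
    Measurable A := by
  have key : ∀ (F : Set E), IsClosed F → ∀ c : ℝ,
      MeasurableSet {x | ∃ B ∈ S, B ∈ F ∧ (∀ i, G i B ≤ ρ x i) ∧ c ≤ D B} := by
    intro F hF c
    have hcl : ∀ N, IsClosed {σ : ι → ℝ | ∃ B ∈ K N, B ∈ S ∧ B ∈ F ∧ (∀ i, G i B ≤ σ i) ∧ c ≤ D B} := by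
      intro N
      have : CompactSpace (K N) := isCompact_iff_compactSpace.mp (hKc N)
      have h1 : IsClosed {q : (ι → ℝ) × K N | (q.2 : E) ∈ S ∧ (q.2 : E) ∈ F ∧
          (∀ i, G i q.2 ≤ q.1 i) ∧ c ≤ D q.2} := by
        have e : Continuous fun q : (ι → ℝ) × K N => (q.2 : E) :=
          continuous_subtype_val.comp continuous_snd
        refine (hS.preimage e).inter ((hF.preimage e).inter (IsClosed.inter ?_ ?_))
        · have : {q : (ι → ℝ) × K N | ∀ i, G i q.2 ≤ q.1 i} = ⋂ i, {q | G i q.2 ≤ q.1 i} := by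
            ext; simp
          change IsClosed {q : (ι → ℝ) × K N | ∀ i, G i q.2 ≤ q.1 i}
          rw [this]
          exact isClosed_iInter fun i => isClosed_le ((hG i).comp e)
            ((continuous_apply i).comp continuous_fst)
        · exact isClosed_le continuous_const (hD.comp e)
      have h2 := isClosedMap_fst_of_compactSpace (X := ι → ℝ) (Y := K N) _ h1
      convert h2 using 1
      ext σ
      simp only [Set.mem_ofPred_eq, Set.mem_image, Prod.exists, Subtype.exists]
      constructor
      · rintro ⟨B, hB, h⟩
        exact ⟨σ, B, hB, h, rfl⟩
      · rintro ⟨_, B, hB, h, rfl⟩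
        exact ⟨B, hB, h⟩
    have : {x | ∃ B ∈ S, B ∈ F ∧ (∀ i, G i B ≤ ρ x i) ∧ c ≤ D B} = ⋃ N, ρ ⁻¹'
        {σ : ι → ℝ | ∃ B ∈ K N, B ∈ S ∧ B ∈ F ∧ (∀ i, G i B ≤ σ i) ∧ c ≤ D B} := by
      ext x
      simp only [Set.mem_ofPred_eq, Set.mem_iUnion, Set.mem_preimage]
      constructor
      · rintro ⟨B, h1, h2, h3, h4⟩
        obtain ⟨N, hN⟩ := hK x
        exact ⟨N, B, hN B h1 h3, h1, h2, h3, h4⟩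
      · rintro ⟨N, B, -, h⟩
        exact ⟨B, h⟩
    rw [this]
    exact MeasurableSet.iUnion fun N => hρ (hcl N).measurableSet
  refine measurable_of_isClosed fun F hF => ?_
  have : A ⁻¹' F = ⋂ c : ℚ, {x | ∃ B ∈ S, B ∈ Set.univ ∧ (∀ i, G i B ≤ ρ x i) ∧ (c : ℝ) ≤ D B}ᶜ ∪
      {x | ∃ B ∈ S, B ∈ F ∧ (∀ i, G i B ≤ ρ x i) ∧ (c : ℝ) ≤ D B} := by
    ext x
    have hmax : ∀ B ∈ S, (∀ i, G i B ≤ ρ x i) → D B ≤ D (A x) := by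
      intro B h1 h2
      by_contra h
      push Not at h
      have := huniq x B h1 h2 h.le
      rw [this] at h
      exact lt_irrefl _ h
    simp only [Set.mem_preimage, Set.mem_iInter, Set.mem_union, Set.mem_compl_iff,
      Set.mem_ofPred_eq, Set.mem_univ, true_and]
    constructor
    · intro hx c
      by_cases hc : (c : ℝ) ≤ D (A x)
      · exact Or.inr ⟨A x, hAS x, hx, hAG x, hc⟩
      · left
        rintro ⟨B, h1, h2, h3⟩
        exact hc (h3.trans (hmax B h1 h2))
    · intro h
      have h' : ∀ c : ℚ, (c : ℝ) ≤ D (A x) →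
          ∃ B ∈ S, B ∈ F ∧ (∀ i, G i B ≤ ρ x i) ∧ (c : ℝ) ≤ D B := by
        intro c hc
        exact (h c).resolve_left (fun hn => hn ⟨A x, hAS x, hAG x, hc⟩)
      obtain ⟨N, hN⟩ := hK x
      have hcl : IsClosed (S ∩ F ∩ {B | ∀ i, G i B ≤ ρ x i}) := by
        refine (hS.inter hF).inter ?_
        have : {B | ∀ i, G i B ≤ ρ x i} = ⋂ i, {B | G i B ≤ ρ x i} := by ext; simp
        rw [this]
        exact isClosed_iInter fun i => isClosed_le (hG i) continuous_const
      have hcpt : IsCompact (K N ∩ (S ∩ F ∩ {B | ∀ i, G i B ≤ ρ x i})) := (hKc N).inter_right hcl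
      have hne : (K N ∩ (S ∩ F ∩ {B | ∀ i, G i B ≤ ρ x i})).Nonempty := by
        obtain ⟨c, hc⟩ := exists_rat_lt (D (A x))
        obtain ⟨B, h1, h2, h3, -⟩ := h' c hc.le
        exact ⟨B, hN B h1 h3, ⟨h1, h2⟩, h3⟩
      obtain ⟨B, ⟨_, ⟨hBS, hBF⟩, hBG⟩, hBmax⟩ := hcpt.exists_isMaxOn hne hD.continuousOn
      have : D (A x) ≤ D B := by
        by_contra hlt
        push Not at hlt
        obtain ⟨c, hc1, hc2⟩ := exists_rat_btwn hlt
        obtain ⟨B', h1, h2, h3, h4⟩ := h' c hc2.le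
        have : D B' ≤ D B := hBmax ⟨hN B' h1 h3, ⟨h1, h2⟩, h3⟩
        linarith
      rw [← huniq x B hBS hBG this]
      exact hBF
  rw [this]
  exact MeasurableSet.iInter fun c =>
    ((key Set.univ isClosed_univ c).compl).union (key F hF c)

variable {d : ℕ}

lemma seminorm_continuous (p : Seminorm ℂ (Fin d → ℂ)) : Continuous p := by
  have hb : ∀ u, p u ≤ (∑ i, p (Pi.single i 1)) * ‖u‖ := by
    intro u
    have hu : u = ∑ i, u i • (Pi.single i (1:ℂ) : Fin d → ℂ) := by
      ext j; simp [Finset.sum_apply, Pi.single_apply]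
    conv_lhs => rw [hu]
    refine (Finset.le_sum_of_subadditive p (map_zero p).le (map_add_le_add p) Finset.univ _).trans ?_
    rw [Finset.sum_mul]
    refine Finset.sum_le_sum fun i _ => ?_
    rw [map_smul_eq_mul, mul_comm]
    exact mul_le_mul_of_nonneg_left (norm_le_pi_norm u i) (apply_nonneg p _)
  have hC : 0 ≤ ∑ i, p (Pi.single i 1) := Finset.sum_nonneg fun i _ => apply_nonneg p _
  let C : NNReal := ⟨_, hC⟩
  refine Seminorm.continuous_of_le (q := C • normSeminorm ℂ (Fin d → ℂ)) ?_ ?_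
  · exact continuous_const.mul continuous_norm
  · intro u; exact hb u

lemma hahn (p : Seminorm ℂ (Fin d → ℂ)) (v : Fin d → ℂ) (hv : v ≠ 0) :
    ∃ w : Fin d → ℂ, w ⬝ᵥ v = p v ∧ ∀ u, ‖w ⬝ᵥ u‖ ≤ p u := by
  obtain ⟨g, hg, hgp⟩ := Module.Dual.exists_extension_of_le_seminorm (Submodule.span ℂ {v})
    ((p v : ℂ) • (LinearEquiv.coord ℂ (Fin d → ℂ) v hv).toLinearMap) (p := p) (by
      rintro ⟨x, hx⟩
      obtain ⟨c, rfl⟩ := Submodule.mem_span_singleton.mp hx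
      have : (LinearEquiv.coord ℂ (Fin d → ℂ) v hv) ⟨c • v, hx⟩ = c := by
        have := LinearEquiv.coord_apply_smul ℂ (Fin d → ℂ) v hv ⟨c • v, hx⟩
        exact smul_left_injective ℂ hv this
      simp only [LinearMap.smul_apply, LinearEquiv.coe_coe, this, map_smul_eq_mul]
      simp [mul_comm, abs_of_nonneg (apply_nonneg p v)])
  have hgw : ∀ u, (fun i => g (Pi.single i 1)) ⬝ᵥ u = g u := by
    intro u
    have hu : u = ∑ i, u i • (Pi.single i (1:ℂ) : Fin d → ℂ) := by
      ext j; simp [Finset.sum_apply, Pi.single_apply]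
    conv_rhs => rw [hu]
    simp [dotProduct, map_sum, mul_comm]
  refine ⟨fun i => g (Pi.single i 1), ?_, fun u => ?_⟩
  · rw [hgw]
    have := hg ⟨v, Submodule.mem_span_singleton_self v⟩
    simpa [LinearEquiv.coord_self] using this
  · rw [hgw]; exact hgp u

lemma evNorm_nonneg (u : Fin d → ℂ) : 0 ≤ evNorm u := norm_nonneg _

lemma evNorm_sq (u : Fin d → ℂ) : star u ⬝ᵥ u = ((evNorm u ^ 2 : ℝ) : ℂ) := by
  rw [evNorm, EuclideanSpace.norm_sq_eq]
  simp [dotProduct, Complex.conj_mul']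

lemma evNorm_add (u v : Fin d → ℂ) : evNorm (u + v) ≤ evNorm u + evNorm v := norm_add_le _ _

lemma evNorm_smul (c : ℂ) (u : Fin d → ℂ) : evNorm (c • u) = ‖c‖ * evNorm u :=
  norm_smul c (WithLp.toLp 2 u)

lemma evNorm_eq_zero {u : Fin d → ℂ} : evNorm u = 0 ↔ u = 0 := by
  simp [evNorm]

lemma continuous_evNorm : Continuous (evNorm : (Fin d → ℂ) → ℝ) := by
  unfold evNorm
  exact continuous_norm.comp (PiLp.continuous_toLp 2 _)

lemma norm_le_evNorm (u : Fin d → ℂ) (i : Fin d) : ‖u i‖ ≤ evNorm u :=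
  PiLp.norm_apply_le (WithLp.toLp 2 u) i

lemma cauchy (w u : Fin d → ℂ) : ‖w ⬝ᵥ u‖ ≤ evNorm w * evNorm u := by
  have := norm_inner_le_norm (𝕜 := ℂ) (WithLp.toLp 2 (star w)) (WithLp.toLp 2 u)
  have h2 : evNorm (star w) = evNorm w := by
    simp [evNorm, EuclideanSpace.norm_eq]
  rw [← h2]
  simpa [evNorm, EuclideanSpace.inner_eq_star_dotProduct, dotProduct_comm] using this

lemma exists_lower (p : Seminorm ℂ (Fin d → ℂ)) (hp : ∀ u, p u = 0 → u = 0) :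
    ∃ ε > 0, ∀ u, ε * evNorm u ≤ p u := by
  have hcpt : IsCompact {u : Fin d → ℂ | evNorm u = 1} := by
    refine (isCompact_closedBall (0 : Fin d → ℂ) 1).of_isClosed_subset
      (isClosed_eq continuous_evNorm continuous_const) ?_
    intro u hu
    rw [mem_closedBall_zero_iff, pi_norm_le_iff_of_nonneg zero_le_one]
    intro i
    exact (norm_le_evNorm u i).trans (le_of_eq hu)
  obtain ⟨ε, hε, h⟩ := hcpt.exists_forall_le' (f := p) (seminorm_continuous p).continuousOn (a := 0) (by
    intro b hb
    refine lt_of_le_of_ne (apply_nonneg p b) fun h => ?_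
    have := hp b h.symm
    have h0 : evNorm b = 0 := evNorm_eq_zero.mpr this
    rw [Set.mem_ofPred_eq, h0] at hb
    norm_num at hb)
  refine ⟨ε, hε, fun u => ?_⟩
  by_cases hu : evNorm u = 0
  · rw [hu, mul_zero]; exact apply_nonneg p u
  · have hpos := lt_of_le_of_ne (evNorm_nonneg u) (Ne.symm hu)
    have h1 := h (((evNorm u)⁻¹ : ℂ) • u) (by
      simp [evNorm_smul, abs_of_pos hpos, hu])
    rw [map_smul_eq_mul] at h1
    simp only [norm_inv, Complex.norm_real, Real.norm_eq_abs, abs_of_pos hpos] at h1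
    rwa [inv_mul_eq_div, le_div_iff₀ hpos] at h1

open scoped MatrixOrder in
lemma mid_one {S : Matrix (Fin d) (Fin d) ℂ} (hS : S.PosDef) (h1 : S.det = 1)
    (hle : (((1/2 : ℂ) • (1 + S)).det).re ≤ 1) : S = 1 := by
  have hH := hS.isHermitian
  have hdet := hH.det_eq_prod_eigenvalues
  have hpos := hS.eigenvalues_pos
  have hsp := hH.spectral_theorem
  have hmid : ((1/2 : ℂ) • (1 + S)) = Unitary.conjStarAlgAut ℂ _ hH.eigenvectorUnitary
      (diagonal (fun i => (((1 + hH.eigenvalues i) / 2 : ℝ) : ℂ))) := by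
    have : (diagonal (fun i => (((1 + hH.eigenvalues i) / 2 : ℝ) : ℂ)) : Matrix (Fin d) (Fin d) ℂ)
        = (1/2 : ℂ) • (1 + diagonal (RCLike.ofReal ∘ hH.eigenvalues)) := by
      rw [← diagonal_one, diagonal_add, ← diagonal_smul]
      congr 1
      ext i
      simp
      ring
    rw [this, map_smul, map_add, map_one, ← hsp]
  have hdm : ((1/2 : ℂ) • (1 + S)).det = ((∏ i, (1 + hH.eigenvalues i) / 2 : ℝ) : ℂ) := by
    rw [hmid, Unitary.conjStarAlgAut_apply, det_mul_right_comm]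
    simp
  rw [hdm, Complex.ofReal_re] at hle
  have hp1 : ∏ i, hH.eigenvalues i = 1 := by
    rw [h1] at hdet
    have h2 : ((∏ i, hH.eigenvalues i : ℝ) : ℂ) = 1 := by rw [hdet]; simp
    exact_mod_cast h2
  have hall : ∀ i, hH.eigenvalues i = 1 := by
    by_contra hne
    push Not at hne
    obtain ⟨j, hj⟩ := hne
    have hlt : ∏ i, hH.eigenvalues i < ∏ i, ((1 + hH.eigenvalues i) / 2) ^ 2 := by
      refine Finset.prod_lt_prod (fun i _ => hpos i) (fun i _ => ?_) ⟨j, Finset.mem_univ j, ?_⟩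
      · nlinarith [sq_nonneg (1 - hH.eigenvalues i)]
      · have : 0 < (1 - hH.eigenvalues j) ^ 2 := by
          have : 1 - hH.eigenvalues j ≠ 0 := sub_ne_zero.mpr (Ne.symm hj)
          positivity
        nlinarith
    rw [Finset.prod_pow, hp1] at hlt
    have h0 : 0 ≤ ∏ i, (1 + hH.eigenvalues i) / 2 :=
      Finset.prod_nonneg fun i _ => by have := hpos i; linarith
    nlinarith
  have : (RCLike.ofReal ∘ hH.eigenvalues : Fin d → ℂ) = fun _ => 1 := by
    ext i; simp [hall i]
  rw [hsp, this, diagonal_one, map_one]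

open scoped MatrixOrder in
lemma mid_eq {A B : Matrix (Fin d) (Fin d) ℂ} (hA : A.PosDef) (hB : B.PosDef)
    (hAB : A.det = B.det) (hle : (((1/2 : ℂ) • (A + B)).det).re ≤ A.det.re) : B = A := by
  obtain ⟨M, hM⟩ := CStarAlgebra.nonneg_iff_eq_star_mul_self.mp hA.posSemidef.nonneg
  rw [star_eq_conjTranspose] at hM
  have hdA := hA.det_pos
  have hdM : IsUnit M.det := by
    rw [isUnit_iff_ne_zero]
    intro h
    rw [hM, det_mul, h, mul_zero] at hdA
    exact lt_irrefl _ hdA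
  have hMu : IsUnit M := (isUnit_iff_isUnit_det M).mpr hdM
  have hi1 : M⁻¹ * M = 1 := nonsing_inv_mul M hdM
  have hi2 : Mᴴ * (M⁻¹)ᴴ = 1 := by rw [← conjTranspose_mul, hi1, conjTranspose_one]
  set S := (M⁻¹)ᴴ * B * M⁻¹ with hSdef
  have hBS : B = Mᴴ * S * M := by
    calc B = (Mᴴ * (M⁻¹)ᴴ) * B * (M⁻¹ * M) := by rw [hi1, hi2]; simp
      _ = _ := by rw [hSdef]; simp only [Matrix.mul_assoc]
  have hSP : S.PosDef := by
    refine hB.conjTranspose_mul_mul_same ?_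
    refine mulVec_injective_iff_isUnit.mpr ?_
    exact (isUnit_iff_isUnit_det _).mpr (isUnit_nonsing_inv_det M hdM)
  have e1 : B.det = A.det * S.det := by
    rw [hBS, hM]; simp only [det_mul]; ring
  have hS1 : S.det = 1 := by
    rw [← hAB] at e1
    exact (mul_eq_left₀ hdA.ne').mp e1.symm
  have e2 : ((1/2 : ℂ) • (A + B)).det = A.det * ((1/2 : ℂ) • (1 + S)).det := by
    have : (1/2 : ℂ) • (A + B) = Mᴴ * ((1/2 : ℂ) • (1 + S)) * M := by
      rw [hBS, hM]; simp [Matrix.mul_add, Matrix.add_mul]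
    rw [this, hM]; simp only [det_mul]; ring
  have hre : 0 < A.det.re ∧ 0 = A.det.im := by
    simpa [Complex.lt_def] using hdA
  have := mid_one hSP hS1 (by
    rw [e2, Complex.mul_re, ← hre.2, zero_mul, sub_zero] at hle
    by_contra h
    push Not at h
    nlinarith [hre.1])
  rw [hBS, this, hM]; simp

lemma bern (s : ℝ) (hs : (d : ℝ) < s) : ∃ τ > 0, 1 < ((1 + τ)⁻¹) ^ d * (1 + τ * s) := by
  have hd : (0 : ℝ) ≤ d := Nat.cast_nonneg d
  have hs0 : 0 < s := lt_of_le_of_lt hd hs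
  refine ⟨(s - d) / (2 * s * (d + 1)), div_pos (by linarith) (by positivity), ?_⟩
  set τ := (s - d) / (2 * s * (d + 1)) with hτ
  have hτ0 : 0 < τ := div_pos (by linarith) (by positivity)
  have h1 : τ * s * (d + 1) = (s - d) / 2 := by rw [hτ]; field_simp
  have hb := one_add_mul_le_pow (a := -(τ / (1 + τ))) (by
    have : τ / (1 + τ) ≤ 1 := by rw [div_le_one (by linarith)]; linarith
    linarith) d
  have e : 1 + -(τ / (1 + τ)) = (1 + τ)⁻¹ := by field_simp; ring
  rw [e] at hb
  refine lt_of_lt_of_le ?_ (mul_le_mul_of_nonneg_right hb (by positivity))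
  have e2 : (1 + (d : ℝ) * -(τ / (1 + τ))) * (1 + τ * s) - 1 =
      τ / (1 + τ) * (s - d + τ * s - d * (τ * s)) := by field_simp; ring
  have : 0 < τ / (1 + τ) * (s - d + τ * s - d * (τ * s)) := by
    refine mul_pos (by positivity) ?_
    nlinarith [mul_pos hτ0 hs0]
  linarith

open scoped MatrixOrder in
lemma improve (p : Seminorm ℂ (Fin d → ℂ)) {W : Matrix (Fin d) (Fin d) ℂ} (hW : W.PosDef)
    (hWp : ∀ u, evNorm (W *ᵥ u) ≤ p u) (v : Fin d → ℂ)
    (hv : Real.sqrt d * evNorm (W *ᵥ v) < p v) :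
    ∃ W' : Matrix (Fin d) (Fin d) ℂ, W'.PosSemidef ∧ (∀ u, evNorm (W' *ᵥ u) ≤ p u) ∧
      W.det.re < W'.det.re := by
  have hpv : 0 < p v := lt_of_le_of_lt (mul_nonneg (Real.sqrt_nonneg _) (evNorm_nonneg _)) hv
  have hv0 : v ≠ 0 := by rintro rfl; simp at hpv
  obtain ⟨w, hwv, hwp⟩ := hahn p v hv0
  have hdW := hW.det_pos
  have hi : W⁻¹ * W = 1 := nonsing_inv_mul W (isUnit_iff_ne_zero.mpr hdW.ne')
  set z := w ᵥ* W⁻¹ with hz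
  have hzu : ∀ u, z ⬝ᵥ (W *ᵥ u) = w ⬝ᵥ u := by
    intro u
    rw [dotProduct_mulVec, hz, vecMul_vecMul, hi, vecMul_one]
  have hs : (d : ℝ) < evNorm z ^ 2 := by
    have h1 := cauchy z (W *ᵥ v)
    rw [hzu, hwv, Complex.norm_real, Real.norm_eq_abs, abs_of_pos hpv] at h1
    have h2 : Real.sqrt d < evNorm z :=
      lt_of_mul_lt_mul_right (hv.trans_le h1) (evNorm_nonneg _)
    exact (Real.sqrt_lt' (lt_of_le_of_lt (Real.sqrt_nonneg _) h2)).mp h2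
  obtain ⟨τ, hτ, hτs⟩ := bern _ hs
  set N : Matrix (Fin d) (Fin d) ℂ := 1 + (τ : ℂ) • vecMulVec (star z) z with hN
  have hτc : (0 : ℂ) ≤ (τ : ℂ) := by exact_mod_cast hτ.le
  have hσc : (0 : ℂ) ≤ (((1 + τ)⁻¹ : ℝ) : ℂ) := by
    have : 0 ≤ (1 + τ)⁻¹ := by positivity
    exact_mod_cast this
  have hNp : N.PosSemidef := PosSemidef.one.add ((posSemidef_vecMulVec_star_self z).smul hτc)
  set A : Matrix (Fin d) (Fin d) ℂ := (((1 + τ)⁻¹ : ℝ) : ℂ) • (Wᴴ * N * W) with hA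
  have hAp : A.PosSemidef := (hNp.conjTranspose_mul_mul_same W).smul hσc
  set W' := CFC.sqrt A with hW'
  have hW'p : W'.PosSemidef := (CFC.sqrt_nonneg A).posSemidef
  have hsq : W' * W' = A := CFC.sqrt_mul_sqrt_self A hAp.nonneg
  have hNdet : N.det = ((1 + τ * evNorm z ^ 2 : ℝ) : ℂ) := by
    have : N = 1 + replicateCol Unit ((τ : ℂ) • star z) * replicateRow Unit z := by
      rw [hN]; ext i j; simp [vecMulVec_apply, Matrix.mul_apply]
    rw [this, det_one_add_replicateCol_mul_replicateRow, dotProduct_smul, dotProduct_comm,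
      evNorm_sq]
    simp
  have hre : 0 < W.det.re ∧ 0 = W.det.im := by simpa [Complex.lt_def] using hdW
  have hre' : 0 ≤ W'.det.re ∧ 0 = W'.det.im := by
    simpa [Complex.le_def] using hW'p.det_nonneg
  have hWr : W.det = (W.det.re : ℂ) := Complex.ext (by simp) (by simp [← hre.2])
  have hWr' : W'.det = (W'.det.re : ℂ) := Complex.ext (by simp) (by simp [← hre'.2])
  refine ⟨W', hW'p, fun u => ?_, ?_⟩
  · have e : ((evNorm (W' *ᵥ u) ^ 2 : ℝ) : ℂ) =
        (((1 + τ)⁻¹ * (evNorm (W *ᵥ u) ^ 2 + τ * ‖w ⬝ᵥ u‖ ^ 2) : ℝ) : ℂ) := by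
      rw [← evNorm_sq, star_mulVec, ← dotProduct_mulVec, mulVec_mulVec,
        hW'p.isHermitian.eq, hsq, hA, smul_mulVec, dotProduct_smul, ← mulVec_mulVec,
        ← mulVec_mulVec, dotProduct_mulVec, ← star_mulVec, hN, add_mulVec, one_mulVec,
        dotProduct_add, evNorm_sq, smul_mulVec, dotProduct_smul, vecMulVec_mulVec, hzu]
      have : star (W *ᵥ u) ⬝ᵥ star z = star (w ⬝ᵥ u) := by
        rw [← hzu u, star_dotProduct_star, dotProduct_comm]
      simp [dotProduct_smul, this, Complex.mul_conj']
    have e' : evNorm (W' *ᵥ u) ^ 2 =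
        (1 + τ)⁻¹ * (evNorm (W *ᵥ u) ^ 2 + τ * ‖w ⬝ᵥ u‖ ^ 2) := by exact_mod_cast e
    have hpu := apply_nonneg p u
    refine (sq_le_sq₀ (evNorm_nonneg _) hpu).mp ?_
    rw [e', inv_mul_le_iff₀ (by linarith)]
    have h1 := pow_le_pow_left₀ (evNorm_nonneg _) (hWp u) 2
    have h2 := pow_le_pow_left₀ (norm_nonneg _) (hwp u) 2
    nlinarith
  · have e : W'.det * W'.det = (((1 + τ)⁻¹ ^ d * (1 + τ * evNorm z ^ 2) *
        (W.det.re * W.det.re) : ℝ) : ℂ) := by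
      rw [← det_mul, hsq, hA, det_smul, det_mul, det_mul, hW.isHermitian.eq, hNdet]
      rw [hWr]
      simp
      ring
    rw [hWr'] at e
    have e' : W'.det.re * W'.det.re = (1 + τ)⁻¹ ^ d * (1 + τ * evNorm z ^ 2) *
        (W.det.re * W.det.re) := by exact_mod_cast e
    have : W.det.re * W.det.re < W'.det.re * W'.det.re := by
      rw [e']
      exact lt_mul_of_one_lt_left (mul_pos hre.1 hre.1) hτs
    exact lt_of_mul_self_lt_mul_self₀ hre'.1 this

lemma box_compact (R : ℝ) : IsCompact {B : Fin d → Fin d → ℂ | ∀ i j, ‖B i j‖ ≤ R} := by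
  have : {B : Fin d → Fin d → ℂ | ∀ i j, ‖B i j‖ ≤ R} =
      Set.univ.pi fun _ => Set.univ.pi fun _ => Metric.closedBall (0 : ℂ) R := by
    ext B; simp [Set.mem_pi]
  rw [this]
  exact isCompact_univ_pi fun _ => isCompact_univ_pi fun _ => isCompact_closedBall _ _

lemma entry_le (B : Matrix (Fin d) (Fin d) ℂ) (i j : Fin d) :
    ‖B i j‖ ≤ evNorm (B *ᵥ Pi.single j 1) := by
  have := norm_le_evNorm (B *ᵥ Pi.single j 1) i
  simpa using this

lemma psd_closed : IsClosed {B : Matrix (Fin d) (Fin d) ℂ | B.PosSemidef} := by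
  have : {B : Matrix (Fin d) (Fin d) ℂ | B.PosSemidef} =
      {B | Bᴴ = B} ∩ ⋂ u : Fin d → ℂ, {B | 0 ≤ star u ⬝ᵥ (B *ᵥ u)} := by
    ext B
    simp [posSemidef_iff_dotProduct_mulVec, IsHermitian]
  rw [this]
  refine IsClosed.inter (isClosed_eq (by fun_prop) continuous_id) ?_
  refine isClosed_iInter fun u => ?_
  have hc : IsClosed {a : ℂ | 0 ≤ a} := isClosed_Ici
  exact hc.preimage (f := fun B : Matrix (Fin d) (Fin d) ℂ => star u ⬝ᵥ (B *ᵥ u)) (by fun_prop)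

lemma continuous_G (u : Fin d → ℂ) :
    Continuous fun B : Matrix (Fin d) (Fin d) ℂ => evNorm (B *ᵥ u) :=
  continuous_evNorm.comp (by fun_prop)

lemma continuous_D : Continuous fun B : Matrix (Fin d) (Fin d) ℂ => B.det.re :=
  Complex.continuous_re.comp (by fun_prop)

lemma psd_re {B : Matrix (Fin d) (Fin d) ℂ} (hB : B.PosSemidef) : B.det = (B.det.re : ℂ) := by
  have h : 0 ≤ B.det.re ∧ 0 = B.det.im := by
    simpa [Complex.le_def] using hB.det_nonneg
  exact Complex.ext (by simp) (by simp [← h.2])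

lemma psd_pos {B : Matrix (Fin d) (Fin d) ℂ} (hB : B.PosSemidef) (h : 0 < B.det.re) :
    B.PosDef := by
  open scoped MatrixOrder in
  rw [hB.posDef_iff_det_ne_zero]
  intro h0
  rw [h0] at h
  simp at h

lemma exists_max (p : Seminorm ℂ (Fin d → ℂ)) (hp : ∀ u, p u = 0 → u = 0) :
    ∃ W : Matrix (Fin d) (Fin d) ℂ, W.PosDef ∧ (∀ u, evNorm (W *ᵥ u) ≤ p u) ∧
      (∀ u, p u ≤ Real.sqrt d * evNorm (W *ᵥ u)) ∧
      ∀ B : Matrix (Fin d) (Fin d) ℂ, B.PosSemidef → (∀ u, evNorm (B *ᵥ u) ≤ p u) →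
        W.det.re ≤ B.det.re → B = W := by
  obtain ⟨ε, hε, hεp⟩ := exists_lower p hp
  set C : Set (Matrix (Fin d) (Fin d) ℂ) :=
    {B | B.PosSemidef} ∩ ⋂ u, {B | evNorm (B *ᵥ u) ≤ p u} with hC
  have hCcl : IsClosed C := psd_closed.inter
    (isClosed_iInter fun u => isClosed_le (continuous_G u) continuous_const)
  have hCc : IsCompact C := by
    refine IsCompact.of_isClosed_subset (box_compact (∑ j, p (Pi.single j 1))) hCcl ?_
    rintro B ⟨-, hB⟩ i j
    rw [Set.mem_iInter] at hB
    refine (entry_le B i j).trans ((hB _).trans ?_)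
    exact Finset.single_le_sum (f := fun j => p (Pi.single j (1:ℂ)))
      (fun j _ => apply_nonneg p _) (Finset.mem_univ j)
  have hεC : ((ε : ℂ) • (1 : Matrix (Fin d) (Fin d) ℂ)) ∈ C := by
    refine ⟨PosSemidef.one.smul (by exact_mod_cast hε.le), Set.mem_iInter.mpr fun u => ?_⟩
    simp only [Set.mem_ofPred_eq, smul_mulVec, one_mulVec, evNorm_smul, Complex.norm_real,
      Real.norm_eq_abs, abs_of_pos hε]
    exact hεp u
  obtain ⟨W, ⟨hWp, hWu⟩, hmax⟩ := hCc.exists_isMaxOn ⟨_, hεC⟩ continuous_D.continuousOn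
  have hWu' : ∀ u, evNorm (W *ᵥ u) ≤ p u := fun u => Set.mem_iInter.mp hWu u
  have hmax' : ∀ B : Matrix (Fin d) (Fin d) ℂ, B.PosSemidef → (∀ u, evNorm (B *ᵥ u) ≤ p u) →
      B.det.re ≤ W.det.re := fun B h1 h2 => hmax ⟨h1, Set.mem_iInter.mpr h2⟩
  have hpos : 0 < W.det.re := by
    refine lt_of_lt_of_le ?_ (hmax hεC)
    simp only [det_smul, det_one, mul_one, Fintype.card_fin, ← Complex.ofReal_pow,
      Complex.ofReal_re]
    positivity
  have hWP := psd_pos hWp hpos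
  refine ⟨W, hWP, hWu', fun u => ?_, fun B hB hBu hle => ?_⟩
  · by_contra h
    push Not at h
    obtain ⟨W', h1, h2, h3⟩ := improve p hWP hWu' u h
    exact absurd (hmax' W' h1 h2) (not_le.mpr h3)
  · have heq : W.det.re = B.det.re := le_antisymm hle (hmax' B hB hBu)
    have hBP := psd_pos hB (heq ▸ hpos)
    refine mid_eq hWP hBP (by rw [psd_re hWp, psd_re hB, heq]) (hmax' _ ?_ fun u => ?_)
    · refine (hWp.add hB).smul ?_
      rw [Complex.le_def]; norm_num
    · rw [smul_mulVec, add_mulVec, evNorm_smul]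
      have := evNorm_add (W *ᵥ u) (B *ᵥ u)
      have h1 := hWu' u
      have h2 := hBu u
      norm_num
      linarith

end Ellip

open Ellip in
/-- ellipsoid approximation. For every measurable function
`r : ℝⁿ × ℂ^d → [0,∞)` such that `r(x,·)` is a norm on `ℂ^d` for each `x`, there exists
a measurable matrix function `W : ℝⁿ → S_d` (Hermitian positive definite) satisfying
`r(x,u) ≤ |W(x)u| ≤ √d · r(x,u)` for all `u ∈ ℂ^d` and a.e. `x`. -/
theorem stmt14 {n d : ℕ} (r : Euc n → (Fin d → ℂ) → ℝ)
    (hmeas : Measurable fun z : Euc n × (Fin d → ℂ) => r z.1 z.2)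
    (hnn : ∀ x u, 0 ≤ r x u)
    (hzero : ∀ x u, r x u = 0 ↔ u = 0)
    (hsmul : ∀ x (c : ℂ) u, r x (c • u) = ‖c‖ * r x u)
    (htri : ∀ x u v, r x (u + v) ≤ r x u + r x v) :
    ∃ W : Euc n → Matrix (Fin d) (Fin d) ℂ,
      (∀ i j, Measurable fun x => W x i j) ∧ (∀ x, (W x).PosDef) ∧
        ∀ᵐ x : Euc n, ∀ u : Fin d → ℂ,
          r x u ≤ evNorm ((W x).mulVec u) ∧
            evNorm ((W x).mulVec u) ≤ Real.sqrt d * r x u := by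
  rcases Nat.eq_zero_or_pos d with hd | hd
  · subst hd
    refine ⟨fun _ => 1, fun i => i.elim0, fun _ => Matrix.PosDef.one, ?_⟩
    refine Filter.Eventually.of_forall fun x u => ?_
    have hu : u = 0 := Subsingleton.elim _ _
    rw [(hzero x u).mpr hu]
    have : evNorm ((1 : Matrix (Fin 0) (Fin 0) ℂ).mulVec u) = 0 :=
      evNorm_eq_zero.mpr (Subsingleton.elim _ _)
    rw [this]
    simp
  let p : Euc n → Seminorm ℂ (Fin d → ℂ) := fun x =>
    Seminorm.of (r x) (htri x) (hsmul x)
  have hpr : ∀ x u, p x u = r x u := fun _ _ => rfl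
  choose A hAP hAu hAd hAuniq using fun x => exists_max (p x) (fun u h => (hzero x u).mp h)
  let q : ℕ → (Fin d → ℂ) := TopologicalSpace.denseSeq (Fin d → ℂ)
  have hq : ∀ x (B : Matrix (Fin d) (Fin d) ℂ),
      (∀ i, evNorm (B.mulVec (q i)) ≤ r x (q i)) → ∀ u, evNorm (B.mulVec u) ≤ p x u := by
    intro x B h u
    have hcl : IsClosed {u | evNorm (B.mulVec u) ≤ p x u} :=
      isClosed_le (continuous_evNorm.comp (by fun_prop)) (seminorm_continuous _)
    have hsub : closure (Set.range q) ⊆ {u | evNorm (B.mulVec u) ≤ p x u} := by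
      refine hcl.closure_subset_iff.mpr ?_
      rintro _ ⟨i, rfl⟩
      exact h i
    have hden : DenseRange q := TopologicalSpace.denseRange_denseSeq _
    exact hsub (hden u)
  have hAm : @Measurable (Euc n) (Fin d → Fin d → ℂ) _ _ A := by
    refine argmax_measurable (E := Fin d → Fin d → ℂ)
      (fun N : ℕ => {B | ∀ i j, ‖B i j‖ ≤ (N : ℝ)}) (fun N => box_compact _)
      (ι := ℕ) (fun x i => r x (q i)) ?_ (fun i B => evNorm (Matrix.mulVec B (q i)))
      (fun i => continuous_G _) (fun B => (Matrix.det B).re) continuous_D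
      {B | Matrix.PosSemidef B} psd_closed _ (fun x => (hAP x).posSemidef)
      (fun x i => hAu x (q i)) ?_ ?_
    · refine measurable_pi_lambda _ fun i => ?_
      exact hmeas.comp (measurable_id.prodMk measurable_const)
    · intro x
      obtain ⟨N, hN⟩ := exists_nat_ge (∑ j, p x (Pi.single j 1))
      refine ⟨N, fun B _ hB i j => ?_⟩
      refine (entry_le B i j).trans ((hq x B hB _).trans (le_trans ?_ hN))
      exact Finset.single_le_sum (f := fun j => p x (Pi.single j (1:ℂ)))
        (fun j _ => apply_nonneg (p x) _) (Finset.mem_univ j)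
    · intro x B hBS hB hle
      exact hAuniq x B hBS (hq x B hB) hle
  have hdpos : 0 < Real.sqrt d := Real.sqrt_pos.mpr (by exact_mod_cast hd)
  refine ⟨fun x => ((Real.sqrt d : ℝ) : ℂ) • A x, fun i j => ?_, fun x => ?_, ?_⟩
  · have h1 : Measurable fun x => A x i j :=
      (measurable_pi_apply j).comp ((measurable_pi_apply i).comp hAm)
    exact h1.const_mul _
  · exact (hAP x).smul (by exact_mod_cast hdpos)
  · refine Filter.Eventually.of_forall fun x u => ?_
    rw [Matrix.smul_mulVec, evNorm_smul, Complex.norm_real, Real.norm_eq_abs, abs_of_pos hdpos]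
    exact ⟨hAd x u, mul_le_mul_of_nonneg_left (hAu x u) hdpos.le⟩
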